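/- There is a constant C > 0, depending only on the dimension d, such that the following holds. Let u ∈ K_th be of class C² on closure(B₁⁺) and satisfy the Signorini conditions ∂u/∂x_d ≤ 0 on B₁' and u · (∂u/∂x_d) = 0 on B₁'. Then F_th(u) ≥ F_th(φ) and (F_th(u) − F_th(φ))^{1/2} ≤ C ‖∇F_th(u)‖_K. (Constrained Łojasiewicz inequality with exponent γ = 1/2 for the thin-obstacle problem.) -/

import Mathlib

open MeasureTheory Filter Topology Set

/-- The open upper half-ball `B₁⁺ = B₁ ∩ {x_d > 0}` (the distinguished coordinate
direction is `i`). -/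
def Bplus (d : ℕ) (i : Fin d) : Set (EuclideanSpace ℝ (Fin d)) :=
  Metric.ball (0 : EuclideanSpace ℝ (Fin d)) 1 ∩ {x | 0 < x i}

/-- The flat part `B₁' = B₁ ∩ {x_d = 0}`. -/
def Bprime (d : ℕ) (i : Fin d) : Set (EuclideanSpace ℝ (Fin d)) :=
  Metric.ball (0 : EuclideanSpace ℝ (Fin d)) 1 ∩ {x | x i = 0}

/-- The closed upper half-ball `closure(B₁⁺)`. -/
def Dplus (d : ℕ) (i : Fin d) : Set (EuclideanSpace ℝ (Fin d)) :=
  closure (Bplus d i)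

/-- The thin-obstacle (Dirichlet) energy `F_th(u) = (1/2)∫_{B₁⁺}|∇u|²`, where the gradient
is taken within the closed half-ball. -/
noncomputable def Fth (d : ℕ) (i : Fin d) (u : EuclideanSpace ℝ (Fin d) → ℝ) : ℝ :=
  (1/2) * ∫ x in Bplus d i, ‖fderivWithin ℝ u (Dplus d i) x‖ ^ 2

/-- The Laplacian of `u` within the closed half-ball: sum of the pure second derivatives
(within `closure(B₁⁺)`) in the coordinate directions. -/
noncomputable def laplTh (d : ℕ) (i : Fin d) (u : EuclideanSpace ℝ (Fin d) → ℝ)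
    (x : EuclideanSpace ℝ (Fin d)) : ℝ :=
  ∑ j : Fin d, iteratedFDerivWithin ℝ 2 u (Dplus d i) x
    ![EuclideanSpace.single j 1, EuclideanSpace.single j 1]

/-- The normal derivative `∂u/∂x_d` (within the closed half-ball). -/
noncomputable def dNorm (d : ℕ) (i : Fin d) (u : EuclideanSpace ℝ (Fin d) → ℝ)
    (x : EuclideanSpace ℝ (Fin d)) : ℝ :=
  fderivWithin ℝ u (Dplus d i) x (EuclideanSpace.single i 1)

/-- The admissible class `K_th` of the thin-obstacle problem: continuous functions on the
closed half-ball, nonnegative on `B₁'`, equal to `g` on `∂B₁ ∩ {x_d ≥ 0}`. -/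
def MemKth (d : ℕ) (i : Fin d) (g u : EuclideanSpace ℝ (Fin d) → ℝ) : Prop :=
  ContinuousOn u (Dplus d i) ∧ (∀ x ∈ Bprime d i, 0 ≤ u x) ∧
  ∀ x ∈ Metric.sphere (0 : EuclideanSpace ℝ (Fin d)) 1, 0 ≤ x i → u x = g x

/-- The constrained norm `‖∇F_th(u)‖_K`: `max(0, sup)` over `v ∈ K_th` with `v ≠ u` in
`L²(B₁⁺)` of `(∫_{B₁⁺}(v - u)Δu)/‖v - u‖_{L²(B₁⁺)}`. -/
noncomputable def KnormTh (d : ℕ) (i : Fin d) (g u : EuclideanSpace ℝ (Fin d) → ℝ) : ℝ :=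
  max 0 (sSup {r : ℝ | ∃ v : EuclideanSpace ℝ (Fin d) → ℝ, MemKth d i g v ∧
    (∫ x in Bplus d i, (v x - u x) ^ 2) ≠ 0 ∧
    r = (∫ x in Bplus d i, (v x - u x) * laplTh d i u x) /
        Real.sqrt (∫ x in Bplus d i, (v x - u x) ^ 2)})

/-!
Green's inequality: if `w` vanishes on the spherical part of the boundary and `w * V i ≥ 0` on the
flat part, then `∫ (∂_V w + w div V) ≤ 0` over the half-ball. To avoid integrating over a domain
with an edge, `w V` is multiplied by `(1 - |x|²) ^ s`, `s > 0`: the product is `o(|y - x|)` at the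
sphere, so its extension by zero is a differentiable field on the half-space. Then `s → 0⁺`.

For `w = u - v` and `V = ∇u`, the Signorini conditions on `u` give
`F(u) - F(v) + F(u - v) ≤ ∫ (v - u) Δu`. With the solution `φ` in the role of `u`, this says that
`φ` minimizes `F`. With `v = φ`, the right-hand side is at most `‖∇F(u)‖_K ‖u - φ‖`, while the
choice of `w²` and `V = id` in Green's inequality gives the Poincaré inequality
`d² ‖w‖² ≤ 8 F(w)`. Completing the square in `‖u - φ‖` yields
`F(u) - F(φ) ≤ 2 ‖∇F(u)‖_K² / d²`.
-/

section Divergence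

variable {E : Type*} [NormedAddCommGroup E] [NormedSpace ℝ E]

/-- The divergence of a vector field, as the trace of its derivative; its value is `0` at points
where the field is not differentiable. -/
noncomputable def divergence (V : E → E) (x : E) : ℝ :=
  LinearMap.trace ℝ E (fderiv ℝ V x)

lemma divergence_id [FiniteDimensional ℝ E] :
    divergence (id : E → E) = fun _ => (Module.finrank ℝ E : ℝ) := by
  ext x
  rw [divergence, fderiv_id, ContinuousLinearMap.coe_id, LinearMap.trace_id]

lemma divergence_congr {V W : E → E} {x : E} (h : V =ᶠ[𝓝 x] W) :
    divergence V x = divergence W x := by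
  rw [divergence, h.fderiv_eq, divergence]

lemma divergence_eq_zero_of_hasFDerivAt_zero {V : E → E} {x : E}
    (h : HasFDerivAt V (0 : E →L[ℝ] E) x) : divergence V x = 0 := by
  rw [divergence, h.fderiv]
  exact map_zero (LinearMap.trace ℝ E)

lemma divergence_of_notMem_tsupport {V : E → E} {x : E} (h : x ∉ tsupport V) :
    divergence V x = 0 := by
  rw [divergence, fderiv_of_notMem_tsupport ℝ h]
  exact map_zero (LinearMap.trace ℝ E)

lemma divergence_smul [FiniteDimensional ℝ E] {f : E → ℝ} {V : E → E} {x : E}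
    (hf : DifferentiableAt ℝ f x) (hV : DifferentiableAt ℝ V x) :
    divergence (fun y => f y • V y) x = fderiv ℝ f x (V x) + f x * divergence V x := by
  have htrace : LinearMap.trace ℝ E ((fderiv ℝ f x).smulRight (V x) : E →L[ℝ] E) =
      fderiv ℝ f x (V x) :=
    LinearMap.trace_smulRight _ _
  rw [divergence, fderiv_fun_smul hf hV, ContinuousLinearMap.toLinearMap_add, map_add, htrace,
    ContinuousLinearMap.toLinearMap_smul, map_smul, smul_eq_mul, add_comm, divergence]

lemma divergence_eq_sum {ι : Type*} [Fintype ι] [DecidableEq ι]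
    (V : EuclideanSpace ℝ ι → EuclideanSpace ℝ ι) (x : EuclideanSpace ℝ ι) :
    divergence V x = ∑ j, fderiv ℝ V x (EuclideanSpace.single j 1) j := by
  simp only [divergence, LinearMap.trace_eq_sum_inner _ (EuclideanSpace.basisFun ι ℝ),
    EuclideanSpace.basisFun_apply, EuclideanSpace.inner_single_left, map_one, one_mul,
    ContinuousLinearMap.coe_coe]

end Divergence

section HalfSpace

variable {n : ℕ} {F : EuclideanSpace ℝ (Fin (n + 1)) → EuclideanSpace ℝ (Fin (n + 1))}

lemma setIntegral_divergence_box {a b : Fin (n + 1) → ℝ} (hab : a ≤ b)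
    (hFc : ContinuousOn F {x | x.ofLp ∈ Icc a b})
    (hFd : ∀ x, (∀ j, x j ∈ Ioo (a j) (b j)) → DifferentiableAt ℝ F x)
    (hFi : IntegrableOn (divergence F) {x | ∀ j, x j ∈ Ioo (a j) (b j)}) :
    ∫ x in {x | ∀ j, x j ∈ Ioo (a j) (b j)}, divergence F x =
      ∑ j, ((∫ y in Icc (a ∘ j.succAbove) (b ∘ j.succAbove),
          F (WithLp.toLp 2 (j.insertNth (b j) y)) j) -
        ∫ y in Icc (a ∘ j.succAbove) (b ∘ j.succAbove),
          F (WithLp.toLp 2 (j.insertNth (a j) y)) j) := by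
  let e := EuclideanSpace.equiv (Fin (n + 1)) ℝ
  let F' (x : Fin (n + 1) → ℝ) : (Fin (n + 1) → ℝ) →L[ℝ] (Fin (n + 1) → ℝ) :=
    (e : EuclideanSpace ℝ (Fin (n + 1)) →L[ℝ] _) ∘L fderiv ℝ F (e.symm x) ∘L e.symm
  have hmp := PiLp.volume_preserving_toLp (Fin (n + 1))
  have hemb : MeasurableEmbedding (WithLp.toLp 2 : (Fin (n + 1) → ℝ) → _) :=
    (MeasurableEquiv.toLp 2 (Fin (n + 1) → ℝ)).measurableEmbedding
  have hdiv : divergence F ∘ WithLp.toLp 2 = fun x => ∑ j, F' x (Pi.single j 1) j :=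
    funext fun x => divergence_eq_sum F _
  have hbox : WithLp.toLp 2 ⁻¹' {x : EuclideanSpace ℝ (Fin (n + 1)) | ∀ j, x j ∈ Ioo (a j) (b j)}
      =ᵐ[volume] Icc a b := by
    have hpi : WithLp.toLp 2 ⁻¹' {x : EuclideanSpace ℝ (Fin (n + 1)) | ∀ j, x j ∈ Ioo (a j) (b j)} =
        univ.pi fun j => Ioo (a j) (b j) := by
      ext x
      simp only [mem_preimage, mem_ofPred_eq, mem_univ_pi]
    rw [hpi]
    exact Measure.univ_pi_Ioo_ae_eq_Icc
  rw [← hmp.integrableOn_comp_preimage hemb, hdiv, integrableOn_congr_set_ae hbox] at hFi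
  rw [← hmp.setIntegral_preimage_emb hemb, setIntegral_congr_set hbox]
  change ∫ x in Icc a b, (divergence F ∘ WithLp.toLp 2) x = _
  rw [hdiv]
  exact integral_divergence_of_hasFDerivAt_off_countable a b hab (e ∘ F ∘ e.symm) F' ∅
    countable_empty (e.continuous.comp_continuousOn (hFc.comp e.symm.continuous.continuousOn
      fun x hx => hx))
    (fun x hx => e.hasFDerivAt.comp x
      ((hFd (e.symm x) fun j => hx.1 j (mem_univ j)).hasFDerivAt.comp x e.symm.hasFDerivAt)) hFi

lemma setIntegral_divergence_box_of_eq_zero {a b : Fin (n + 1) → ℝ} {i : Fin (n + 1)} (hab : a ≤ b)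
    (hFc : ContinuousOn F {x | x.ofLp ∈ Icc a b})
    (hFd : ∀ x, (∀ j, x j ∈ Ioo (a j) (b j)) → DifferentiableAt ℝ F x)
    (hFi : IntegrableOn (divergence F) {x | ∀ j, x j ∈ Ioo (a j) (b j)})
    (hlower : ∀ x, ∀ j ≠ i, x j = a j → F x j = 0) (hupper : ∀ x j, x j = b j → F x j = 0) :
    ∫ x in {x | ∀ j, x j ∈ Ioo (a j) (b j)}, divergence F x =
      -∫ y in Icc (a ∘ i.succAbove) (b ∘ i.succAbove),
        F (WithLp.toLp 2 (i.insertNth (a i) y)) i := by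
  have hlower' : ∀ j ≠ i, ∀ y, F (WithLp.toLp 2 (j.insertNth (a j) y)) j = 0 := fun j hj y =>
    hlower _ j hj (by simp)
  have hupper' : ∀ j y, F (WithLp.toLp 2 (j.insertNth (b j) y)) j = 0 := fun j y =>
    hupper _ j (by simp)
  rw [setIntegral_divergence_box hab hFc hFd hFi, Finset.sum_eq_single i]
  · simp only [hupper', integral_zero, zero_sub]
  · intro j _ hj
    simp only [hupper', hlower' j hj, integral_zero, sub_zero]
  · simp

lemma mem_Ioo_update_neg {ι : Type*} [DecidableEq ι] {x : ι → ℝ} {i j : ι} {R : ℝ}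
    (hi : 0 < x i) (hj : |x j| < R) : x j ∈ Ioo (Function.update (fun _ => -R) i 0 j) R := by
  refine ⟨?_, (abs_lt.1 hj).2⟩
  rcases eq_or_ne j i with rfl | hji
  · rwa [Function.update_self]
  · rw [Function.update_of_ne hji]
    exact (abs_lt.1 hj).1

theorem setIntegral_divergence_halfSpace {i : Fin (n + 1)} (hFc : ContinuousOn F {x | 0 ≤ x i})
    (hFd : ∀ x, 0 < x i → DifferentiableAt ℝ F x) (hFs : HasCompactSupport F)
    (hFi : IntegrableOn (divergence F) {x | 0 < x i}) :
    ∫ x in {x | 0 < x i}, divergence F x =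
      -∫ y, F (WithLp.toLp 2 (i.insertNth 0 y)) i := by
  obtain ⟨R, hR, hsupp⟩ := hFs.isCompact.isBounded.exists_pos_norm_lt
  have hout : ∀ x j, R ≤ |x j| → x ∉ tsupport F := fun x j hj hx =>
    (hj.trans (PiLp.norm_apply_le x j)).not_gt (hsupp x hx)
  have hzero : ∀ x j k, R ≤ |x j| → F x k = 0 := fun x j k hj => by
    rw [image_eq_zero_of_notMem_tsupport (hout x j hj), PiLp.zero_apply]
  let a : Fin (n + 1) → ℝ := Function.update (fun _ => -R) i 0
  have hai : a i = 0 := Function.update_self ..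
  have haj : ∀ j ≠ i, a j = -R := fun j hj => Function.update_of_ne hj ..
  have hab : a ≤ fun _ => R := by
    intro j
    rcases eq_or_ne j i with rfl | hj
    · exact hai.trans_le hR.le
    · exact (haj j hj).trans_le (neg_le_self hR.le)
  have hsub : {x : EuclideanSpace ℝ (Fin (n + 1)) | ∀ j, x j ∈ Ioo (a j) R} ⊆ {x | 0 < x i} :=
    fun x hx => hai.symm.trans_lt (hx i).1
  have hrest : ∀ x ∈ {x | 0 < x i} \ {x | ∀ j, x j ∈ Ioo (a j) R}, divergence F x = 0 := by
    rintro x ⟨hxi, hx⟩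
    obtain ⟨j, hj⟩ := not_forall.1 hx
    refine divergence_of_notMem_tsupport (hout x j ?_)
    contrapose! hj
    exact mem_Ioo_update_neg hxi hj
  rw [setIntegral_eq_of_subset_of_forall_sdiff_eq_zero
      (measurableSet_lt measurable_const (by fun_prop)) hsub hrest,
    setIntegral_divergence_box_of_eq_zero hab (hFc.mono fun x hx => hai.symm.trans_le (hx.1 i))
      (fun x hx => hFd x (hsub hx)) (hFi.mono_set hsub)
      (fun x j hj hx => hzero x j j (by rw [hx, haj j hj, abs_neg, abs_of_pos hR]))
      (fun x j hx => hzero x j j (by rw [hx, abs_of_pos hR])), hai, neg_inj]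
  refine setIntegral_eq_integral_of_forall_compl_eq_zero fun y hy => ?_
  simp only [mem_Icc, Pi.le_def, ← forall_and, not_forall] at hy
  obtain ⟨k, hk⟩ := hy
  refine hzero _ (i.succAbove k) i ?_
  contrapose! hk
  simp only [Fin.insertNth_apply_succAbove] at hk
  exact ⟨(haj _ (Fin.succAbove_ne i k)).trans_le (abs_lt.1 hk).1.le, (abs_lt.1 hk).2.le⟩

end HalfSpace

section HalfBall

variable {d : ℕ} {i : Fin d}

lemma isOpen_Bplus : IsOpen (Bplus d i) :=
  Metric.isOpen_ball.inter (isOpen_lt continuous_const (by fun_prop))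

lemma Bplus_subset_Dplus : Bplus d i ⊆ Dplus d i := subset_closure

lemma Bplus_nonempty : (Bplus d i).Nonempty :=
  ⟨EuclideanSpace.single i (1 / 2), by norm_num [PiLp.norm_single], by simp⟩

lemma Dplus_mem_nhds {x : EuclideanSpace ℝ (Fin d)} (hx : x ∈ Bplus d i) : Dplus d i ∈ 𝓝 x :=
  mem_of_superset (isOpen_Bplus.mem_nhds hx) Bplus_subset_Dplus

lemma isClosed_Dplus : IsClosed (Dplus d i) := isClosed_closure

lemma convex_Bplus : Convex ℝ (Bplus d i) :=
  (convex_ball _ _).inter (convex_halfSpace_gt (EuclideanSpace.proj (𝕜 := ℝ) i).isLinear 0)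

lemma convex_Dplus : Convex ℝ (Dplus d i) := convex_Bplus.closure

lemma Dplus_eq : Dplus d i = Metric.closedBall 0 1 ∩ {x | 0 ≤ x i} := by
  have hconv : Convex ℝ (Metric.closedBall (0 : EuclideanSpace ℝ (Fin d)) 1 ∩ {x | 0 ≤ x i}) :=
    (convex_closedBall _ _).inter (convex_halfSpace_ge (EuclideanSpace.proj (𝕜 := ℝ) i).isLinear 0)
  have hclosed : IsClosed (Metric.closedBall (0 : EuclideanSpace ℝ (Fin d)) 1 ∩ {x | 0 ≤ x i}) :=
    Metric.isClosed_closedBall.inter (isClosed_le continuous_const (by fun_prop))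
  have hint : interior (Metric.closedBall (0 : EuclideanSpace ℝ (Fin d)) 1 ∩ {x | 0 ≤ x i}) =
      Bplus d i := by
    rw [interior_inter, interior_closedBall _ one_ne_zero, interior_halfSpace]
    rfl
  rw [Dplus, ← hint, hconv.closure_interior_eq_closure_of_nonempty_interior
    (hint ▸ Bplus_nonempty), hclosed.closure_eq]

lemma uniqueDiffOn_Dplus : UniqueDiffOn ℝ (Dplus d i) :=
  uniqueDiffOn_convex convex_Dplus
    (Bplus_nonempty.mono (interior_maximal Bplus_subset_Dplus isOpen_Bplus))

lemma isCompact_Dplus : IsCompact (Dplus d i) :=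
  (isCompact_closedBall (0 : EuclideanSpace ℝ (Fin d)) 1).of_isClosed_subset isClosed_Dplus
    (Dplus_eq ▸ inter_subset_left)

lemma integrableOn_Bplus_of_continuousOn {f : EuclideanSpace ℝ (Fin d) → ℝ}
    (hf : ContinuousOn f (Dplus d i)) : IntegrableOn f (Bplus d i) :=
  (hf.integrableOn_compact isCompact_Dplus).mono_set Bplus_subset_Dplus

lemma mem_sphere_of_mem_Dplus {x : EuclideanSpace ℝ (Fin d)} (hxD : x ∈ Dplus d i)
    (hx : 1 ≤ ‖x‖) : x ∈ Metric.sphere (0 : EuclideanSpace ℝ (Fin d)) 1 ∧ 0 ≤ x i := by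
  rw [Dplus_eq] at hxD
  exact ⟨mem_sphere_zero_iff_norm.2 (le_antisymm (mem_closedBall_zero_iff.1 hxD.1) hx), hxD.2⟩

end HalfBall

lemma eq_zero_of_isLittleO_sub {E F : Type*} [NormedAddCommGroup E] [NormedAddCommGroup F]
    {f : E → F} {s : Set E} {x : E} (h : f =o[𝓝[s] x] fun y => y - x) (hx : x ∈ s) : f x = 0 := by
  simpa using (h.def one_pos).self_of_nhdsWithin hx

lemma hasFDerivAt_indicator_zero {E F : Type*} [NormedAddCommGroup E] [NormedSpace ℝ E]
    [NormedAddCommGroup F] [NormedSpace ℝ F] {f : E → F} {s : Set E} {x : E}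
    (h : f =o[𝓝[s] x] fun y => y - x) : HasFDerivAt (s.indicator f) (0 : E →L[ℝ] F) x := by
  have hx : s.indicator f x = 0 :=
    indicator_apply_eq_zero.2 (eq_zero_of_isLittleO_sub h)
  have hin : s.indicator f =o[𝓝[s] x] fun y => y - x :=
    h.congr' (eqOn_indicator.symm.eventuallyEq_nhdsWithin) .rfl
  have hout : s.indicator f =o[𝓝[sᶜ] x] fun y => y - x :=
    (Asymptotics.isLittleO_zero _ _).congr' (eqOn_indicator'.symm.eventuallyEq_nhdsWithin) .rfl
  rw [hasFDerivAt_iff_isLittleO]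
  simpa [hx, ← nhdsWithin_union] using hin.sup hout

section HalfBallDivergence

variable {d : ℕ} {i : Fin d} {F : EuclideanSpace ℝ (Fin d) → EuclideanSpace ℝ (Fin d)}

lemma continuousOn_indicator_Dplus (hFc : ContinuousOn F (Dplus d i))
    (hF : ∀ x ∈ Metric.sphere (0 : EuclideanSpace ℝ (Fin d)) 1, 0 ≤ x i → F x = 0) :
    ContinuousOn ((Dplus d i).indicator F) {x | 0 ≤ x i} := by
  have hout : ∀ x, 1 ≤ ‖x‖ → (Dplus d i).indicator F x = 0 := fun x hx =>
    indicator_apply_eq_zero.2 fun hxD =>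
      hF x (mem_sphere_of_mem_Dplus hxD hx).1 (mem_sphere_of_mem_Dplus hxD hx).2
  refine ((continuousOn_congr eqOn_indicator).2 hFc |>.union_of_isClosed
    (continuousOn_const.congr hout) isClosed_Dplus
    (isClosed_le continuous_const continuous_norm)).mono fun x hx => ?_
  rw [Dplus_eq]
  exact (le_total ‖x‖ 1).imp (fun h => ⟨mem_closedBall_zero_iff.2 h, hx⟩) id

lemma indicator_Dplus_apply_nonneg
    (hFsphere : ∀ x ∈ Metric.sphere (0 : EuclideanSpace ℝ (Fin d)) 1, 0 ≤ x i → F x = 0)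
    (hF : ∀ x ∈ Bprime d i, 0 ≤ F x i) {x : EuclideanSpace ℝ (Fin d)} (hxi : x i = 0) :
    0 ≤ (Dplus d i).indicator F x i := by
  by_cases hxD : x ∈ Dplus d i
  · rw [indicator_of_mem hxD]
    rcases lt_or_ge ‖x‖ 1 with h | h
    · exact hF x ⟨mem_ball_zero_iff.2 h, hxi⟩
    · rw [hFsphere x (mem_sphere_of_mem_Dplus hxD h).1 hxi.ge, PiLp.zero_apply]
  · rw [indicator_of_notMem hxD, PiLp.zero_apply]

lemma hasFDerivAt_indicator_Dplus_zero
    (hF : ∀ x ∈ Metric.sphere (0 : EuclideanSpace ℝ (Fin d)) 1, 0 ≤ x i →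
      F =o[𝓝[Dplus d i] x] fun y => y - x) {x : EuclideanSpace ℝ (Fin d)} (hx : 1 ≤ ‖x‖) :
    HasFDerivAt ((Dplus d i).indicator F)
      (0 : EuclideanSpace ℝ (Fin d) →L[ℝ] EuclideanSpace ℝ (Fin d)) x := by
  refine hasFDerivAt_indicator_zero ?_
  by_cases hxD : x ∈ Dplus d i
  · exact hF x (mem_sphere_of_mem_Dplus hxD hx).1 (mem_sphere_of_mem_Dplus hxD hx).2
  · simp only [notMem_closure_iff_nhdsWithin_eq_bot.1 (isClosed_Dplus.closure_eq.symm ▸ hxD),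
      Asymptotics.isLittleO_bot]

-- `hFo` makes the extension of `F` by zero differentiable across the sphere, so that the edge of
-- the half-ball disappears and only the half-space has to be treated.
theorem setIntegral_divergence_Bplus_nonpos (hFc : ContinuousOn F (Dplus d i))
    (hFd : ∀ x ∈ Bplus d i, DifferentiableAt ℝ F x)
    (hFo : ∀ x ∈ Metric.sphere (0 : EuclideanSpace ℝ (Fin d)) 1, 0 ≤ x i →
      F =o[𝓝[Dplus d i] x] fun y => y - x)
    (hFi : IntegrableOn (divergence F) (Bplus d i)) (hF : ∀ x ∈ Bprime d i, 0 ≤ F x i) :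
    ∫ x in Bplus d i, divergence F x ≤ 0 := by
  obtain _ | n := d
  · exact i.elim0
  let G := (Dplus (n + 1) i).indicator F
  have hFsphere : ∀ x ∈ Metric.sphere (0 : EuclideanSpace ℝ (Fin (n + 1))) 1, 0 ≤ x i → F x = 0 :=
    fun x hx hxi => eq_zero_of_isLittleO_sub (hFo x hx hxi)
      (Dplus_eq ▸ ⟨Metric.sphere_subset_closedBall hx, hxi⟩)
  have hGB : ∀ x ∈ Bplus (n + 1) i, G =ᶠ[𝓝 x] F := fun x hx =>
    eventuallyEq_of_mem (Dplus_mem_nhds hx) eqOn_indicator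
  have hGd : ∀ x, 0 < x i → DifferentiableAt ℝ G x := fun x hx =>
    (lt_or_ge ‖x‖ 1).elim
      (fun h => (hGB x ⟨mem_ball_zero_iff.2 h, hx⟩).differentiableAt_iff.2
        (hFd x ⟨mem_ball_zero_iff.2 h, hx⟩))
      (fun h => (hasFDerivAt_indicator_Dplus_zero hFo h).differentiableAt)
  have hGrest : ∀ x ∈ {x | 0 < x i} \ Bplus (n + 1) i, divergence G x = 0 := fun x hx =>
    divergence_eq_zero_of_hasFDerivAt_zero (hasFDerivAt_indicator_Dplus_zero hFo
      (not_lt.1 fun h => hx.2 ⟨mem_ball_zero_iff.2 h, hx.1⟩))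
  have hmeas : MeasurableSet {x : EuclideanSpace ℝ (Fin (n + 1)) | 0 < x i} :=
    measurableSet_lt measurable_const (by fun_prop)
  have hdiv : EqOn (divergence F) (divergence G) (Bplus (n + 1) i) := fun x hx =>
    (divergence_congr (hGB x hx)).symm
  rw [setIntegral_congr_fun isOpen_Bplus.measurableSet hdiv,
    ← setIntegral_eq_of_subset_of_forall_sdiff_eq_zero (s := Bplus (n + 1) i) hmeas
      inter_subset_right hGrest,
    setIntegral_divergence_halfSpace (continuousOn_indicator_Dplus hFc hFsphere) hGd
      (HasCompactSupport.intro isCompact_Dplus fun x hx => indicator_of_notMem hx F)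
      ((hFi.congr_fun hdiv isOpen_Bplus.measurableSet).of_forall_sdiff_eq_zero hmeas hGrest),
    neg_nonpos]
  exact integral_nonneg fun y => indicator_Dplus_apply_nonneg hFsphere hF (by simp)

end HalfBallDivergence

section Weight

lemma integrable_rpow_mul {α : Type*} [MeasurableSpace α] {μ : Measure α} {ρ f : α → ℝ}
    (hρm : AEMeasurable ρ μ) (hρ : ∀ᵐ x ∂μ, ρ x ∈ Icc (0 : ℝ) 1) (hf : Integrable f μ) {s : ℝ}
    (hs : 0 ≤ s) : Integrable (fun x => ρ x ^ s * f x) μ := by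
  refine hf.bdd_mul (c := 1) (hρm.pow_const s).aestronglyMeasurable ?_
  filter_upwards [hρ] with x hx
  rw [Real.norm_of_nonneg (Real.rpow_nonneg hx.1 s)]
  exact Real.rpow_le_one hx.1 hx.2 hs

lemma tendsto_integral_rpow_mul_sub {α : Type*} [MeasurableSpace α] {μ : Measure α} {ρ f q : α → ℝ}
    (hρm : AEMeasurable ρ μ) (hρ : ∀ᵐ x ∂μ, ρ x ∈ Ioc (0 : ℝ) 1)
    (hf : Integrable f μ) (hq : Integrable q μ) :
    Tendsto (fun s : ℝ => ∫ x, ρ x ^ s * (f x - s * q x) ∂μ) (𝓝[>] 0) (𝓝 (∫ x, f x ∂μ)) := by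
  refine tendsto_integral_filter_of_dominated_convergence (fun x => ‖f x‖ + ‖q x‖) ?_ ?_
    (hf.norm.add hq.norm) ?_
  · exact Eventually.of_forall fun s => (hρm.pow_const s).aestronglyMeasurable.mul
      (hf.sub (hq.const_mul s)).aestronglyMeasurable
  · filter_upwards [Ioo_mem_nhdsGT zero_lt_one] with s hs
    filter_upwards [hρ] with x hx
    rw [norm_mul, Real.norm_of_nonneg (Real.rpow_nonneg hx.1.le s)]
    calc ρ x ^ s * ‖f x - s * q x‖ ≤ 1 * (‖f x‖ + ‖s * q x‖) :=
          mul_le_mul (Real.rpow_le_one hx.1.le hx.2 hs.1.le) (norm_sub_le _ _) (norm_nonneg _)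
            zero_le_one
      _ ≤ ‖f x‖ + ‖q x‖ := by
          rw [one_mul, norm_mul, Real.norm_of_nonneg hs.1.le]
          gcongr
          exact mul_le_of_le_one_left (norm_nonneg _) hs.2.le
  · filter_upwards [hρ] with x hx
    have hcont : ContinuousAt (fun s : ℝ => ρ x ^ s * (f x - s * q x)) 0 :=
      (Real.continuousAt_const_rpow hx.1.ne').mul (by fun_prop)
    simpa using hcont.tendsto.mono_left nhdsWithin_le_nhds

lemma one_sub_norm_sq_pos {E : Type*} [NormedAddCommGroup E] {x : E} (hx : ‖x‖ < 1) :
    0 < 1 - ‖x‖ ^ 2 := by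
  nlinarith [norm_nonneg x]

variable {E : Type*} [NormedAddCommGroup E] [InnerProductSpace ℝ E]

lemma hasFDerivAt_one_sub_norm_sq_rpow {x : E} (hx : ‖x‖ < 1) (s : ℝ) :
    HasFDerivAt (fun y : E => (1 - ‖y‖ ^ 2) ^ s)
      ((s * (1 - ‖x‖ ^ 2) ^ (s - 1)) • -(2 • innerSL ℝ x : E →L[ℝ] ℝ)) x :=
  (hasStrictFDerivAt_norm_sq x).hasFDerivAt.const_sub 1 |>.rpow_const
    (Or.inl (one_sub_norm_sq_pos hx).ne')

lemma divergence_one_sub_norm_sq_rpow_mul_smul [FiniteDimensional ℝ E] {w : E → ℝ} {V : E → E}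
    {x : E} (hx : ‖x‖ < 1) (hw : DifferentiableAt ℝ w x) (hV : DifferentiableAt ℝ V x) (s : ℝ) :
    divergence (fun y => ((1 - ‖y‖ ^ 2) ^ s * w y) • V y) x =
      (1 - ‖x‖ ^ 2) ^ s * (fderiv ℝ w x (V x) + w x * divergence V x -
        s * (w x / (1 - ‖x‖ ^ 2) * (2 * inner ℝ x (V x)))) := by
  have hρ : 1 - ‖x‖ ^ 2 ≠ 0 := (one_sub_norm_sq_pos hx).ne'
  have hder := (hasFDerivAt_one_sub_norm_sq_rpow hx s).fun_mul hw.hasFDerivAt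
  rw [divergence_smul hder.differentiableAt hV, hder.fderiv, Real.rpow_sub_one hρ]
  simp only [add_apply, smul_apply, neg_apply, innerSL_apply_apply, smul_eq_mul, nsmul_eq_mul]
  field_simp
  ring

lemma isLittleO_one_sub_norm_sq_rpow_mul_smul {w : E → ℝ} {V : E → E} {D : Set E} {x : E}
    (hx : ‖x‖ = 1) (hw : DifferentiableWithinAt ℝ w D x) (hwx : w x = 0)
    (hV : ContinuousWithinAt V D x) {s : ℝ} (hs : 0 < s) :
    (fun y => ((1 - ‖y‖ ^ 2) ^ s * w y) • V y) =o[𝓝[D] x] fun y => y - x := by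
  have hweight : Tendsto (fun y => (1 - ‖y‖ ^ 2) ^ s • V y) (𝓝[D] x) (𝓝 0) := by
    have hcont : Continuous fun y : E => (1 - ‖y‖ ^ 2) ^ s :=
      Continuous.rpow_const (by fun_prop) fun _ => Or.inr hs.le
    simpa [ContinuousWithinAt, hx, Real.zero_rpow hs.ne'] using
      (hcont.continuousWithinAt (s := D) (x := x)).fun_smul hV
  have hwO : w =O[𝓝[D] x] fun y => y - x := by
    simpa [hwx] using hw.isBigO_sub
  have hmul := hwO.norm_right.smul_isLittleO ((Asymptotics.isLittleO_one_iff ℝ).2 hweight)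
  simpa only [smul_smul, smul_eq_mul, mul_one, mul_comm (w _), Asymptotics.isLittleO_norm_right]
    using hmul

end Weight

section Green

variable {d : ℕ} {i : Fin d} {w : EuclideanSpace ℝ (Fin d) → ℝ}
  {V : EuclideanSpace ℝ (Fin d) → EuclideanSpace ℝ (Fin d)}

lemma exists_abs_le_mul_one_sub_norm_sq (hw : ContDiffOn ℝ 1 w (Dplus d i))
    (hw0 : ∀ x ∈ Metric.sphere (0 : EuclideanSpace ℝ (Fin d)) 1, 0 ≤ x i → w x = 0) :
    ∃ L, ∀ x ∈ Bplus d i, |w x| ≤ L * (1 - ‖x‖ ^ 2) := by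
  obtain ⟨L, hL⟩ := isCompact_Dplus.exists_bound_of_continuousOn
    (hw.continuousOn_fderivWithin uniqueDiffOn_Dplus le_rfl)
  refine ⟨L, fun x hx => ?_⟩
  have hL0 : 0 ≤ L := (norm_nonneg _).trans (hL x (Bplus_subset_Dplus hx))
  have hx1 : ‖x‖ < 1 := mem_ball_zero_iff.1 hx.1
  have hx0 : ‖x‖ ≠ 0 := norm_ne_zero_iff.2 fun h => (lt_irrefl (0 : ℝ)) (by simpa [h] using hx.2)
  let y := ‖x‖⁻¹ • x
  have hy : ‖y‖ = 1 := by rw [norm_smul, norm_inv, norm_norm, inv_mul_cancel₀ hx0]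
  have hyi : 0 ≤ y i := mul_nonneg (inv_nonneg.2 (norm_nonneg x)) (le_of_lt hx.2)
  have hyD : y ∈ Dplus d i := Dplus_eq ▸ ⟨mem_closedBall_zero_iff.2 hy.le, hyi⟩
  have hxy : ‖x - y‖ = 1 - ‖x‖ := by
    rw [show x - y = (1 - ‖x‖⁻¹) • x by rw [sub_smul, one_smul], norm_smul, Real.norm_eq_abs,
      abs_of_nonpos (sub_nonpos.2 (one_le_inv₀ (by positivity) |>.2 hx1.le))]
    field_simp
    ring
  calc |w x| = ‖w x - w y‖ := by
        rw [hw0 y (mem_sphere_zero_iff_norm.2 hy) hyi, sub_zero, Real.norm_eq_abs]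
    _ ≤ L * ‖x - y‖ := convex_Dplus.norm_image_sub_le_of_norm_fderivWithin_le
        (hw.differentiableOn one_ne_zero) hL hyD (Bplus_subset_Dplus hx)
    _ ≤ L * (1 - ‖x‖ ^ 2) := by
        rw [hxy]
        gcongr
        nlinarith [norm_nonneg x]

lemma integrableOn_div_one_sub_norm_sq_mul (hw : ContDiffOn ℝ 1 w (Dplus d i))
    (hw0 : ∀ x ∈ Metric.sphere (0 : EuclideanSpace ℝ (Fin d)) 1, 0 ≤ x i → w x = 0)
    {f : EuclideanSpace ℝ (Fin d) → ℝ} (hf : IntegrableOn f (Bplus d i)) :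
    IntegrableOn (fun x => w x / (1 - ‖x‖ ^ 2) * f x) (Bplus d i) := by
  obtain ⟨L, hL⟩ := exists_abs_le_mul_one_sub_norm_sq hw hw0
  have hpos : ∀ x ∈ Bplus d i, 0 < 1 - ‖x‖ ^ 2 := fun x hx =>
    one_sub_norm_sq_pos (mem_ball_zero_iff.1 hx.1)
  have hcont : ContinuousOn (fun x => w x / (1 - ‖x‖ ^ 2)) (Bplus d i) :=
    (hw.continuousOn.mono Bplus_subset_Dplus).div (by fun_prop) fun x hx => (hpos x hx).ne'
  refine Integrable.bdd_mul (c := L) hf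
    (hcont.aestronglyMeasurable isOpen_Bplus.measurableSet) ?_
  filter_upwards [self_mem_ae_restrict isOpen_Bplus.measurableSet] with x hx
  rw [norm_div, Real.norm_eq_abs, Real.norm_of_nonneg (hpos x hx).le, div_le_iff₀ (hpos x hx)]
  exact hL x hx

lemma integrableOn_fderivWithin_add_mul (hw : ContDiffOn ℝ 1 w (Dplus d i))
    (hVc : ContinuousOn V (Dplus d i)) {f : EuclideanSpace ℝ (Fin d) → ℝ}
    (hf : IntegrableOn f (Bplus d i)) :
    IntegrableOn (fun x => fderivWithin ℝ w (Dplus d i) x (V x) + w x * f x) (Bplus d i) :=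
  (integrableOn_Bplus_of_continuousOn
    ((hw.continuousOn_fderivWithin uniqueDiffOn_Dplus le_rfl).clm_apply hVc)).add
    (IntegrableOn.continuousOn_mul_of_subset hw.continuousOn hf isCompact_Dplus
      isOpen_Bplus.measurableSet Bplus_subset_Dplus)

lemma ae_one_sub_norm_sq_mem_Ioc :
    ∀ᵐ x ∂volume.restrict (Bplus d i), 1 - ‖x‖ ^ 2 ∈ Ioc (0 : ℝ) 1 := by
  filter_upwards [self_mem_ae_restrict isOpen_Bplus.measurableSet] with x hx
  exact ⟨one_sub_norm_sq_pos (mem_ball_zero_iff.1 hx.1), sub_le_self _ (sq_nonneg _)⟩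

lemma setIntegral_one_sub_norm_sq_rpow_mul_nonpos (hw : ContDiffOn ℝ 1 w (Dplus d i))
    (hw0 : ∀ x ∈ Metric.sphere (0 : EuclideanSpace ℝ (Fin d)) 1, 0 ≤ x i → w x = 0)
    (hVc : ContinuousOn V (Dplus d i)) (hVd : ∀ x ∈ Bplus d i, DifferentiableAt ℝ V x)
    (hVi : IntegrableOn (divergence V) (Bplus d i)) (hwV : ∀ x ∈ Bprime d i, 0 ≤ w x * V x i)
    {s : ℝ} (hs : 0 < s) :
    ∫ x in Bplus d i, (1 - ‖x‖ ^ 2) ^ s *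
      (fderivWithin ℝ w (Dplus d i) x (V x) + w x * divergence V x -
        s * (w x / (1 - ‖x‖ ^ 2) * (2 * inner ℝ x (V x)))) ≤ 0 := by
  have hwd := hw.differentiableOn one_ne_zero
  have hρ : Continuous fun x : EuclideanSpace ℝ (Fin d) => (1 - ‖x‖ ^ 2) ^ s :=
    Continuous.rpow_const (by fun_prop) fun _ => Or.inr hs.le
  have hρd : ∀ x ∈ Bplus d i, DifferentiableAt ℝ (fun y => (1 - ‖y‖ ^ 2) ^ s) x := fun x hx =>
    (hasFDerivAt_one_sub_norm_sq_rpow (mem_ball_zero_iff.1 hx.1) s).differentiableAt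
  have hdiv : EqOn (fun x => (1 - ‖x‖ ^ 2) ^ s *
      (fderivWithin ℝ w (Dplus d i) x (V x) + w x * divergence V x -
        s * (w x / (1 - ‖x‖ ^ 2) * (2 * inner ℝ x (V x)))))
      (divergence fun x => ((1 - ‖x‖ ^ 2) ^ s * w x) • V x) (Bplus d i) := fun x hx => by
    rw [divergence_one_sub_norm_sq_rpow_mul_smul (mem_ball_zero_iff.1 hx.1)
      (hwd.differentiableAt (Dplus_mem_nhds hx)) (hVd x hx),
      ← fderivWithin_of_mem_nhds (Dplus_mem_nhds hx)]
  have hint := integrable_rpow_mul (by fun_prop)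
    (ae_one_sub_norm_sq_mem_Ioc.mono fun x hx => Ioc_subset_Icc_self hx)
    ((integrableOn_fderivWithin_add_mul hw hVc hVi).sub
      ((integrableOn_div_one_sub_norm_sq_mul hw hw0
        (integrableOn_Bplus_of_continuousOn (f := fun x => 2 * inner ℝ x (V x))
          (by fun_prop))).const_mul s)) hs.le
  rw [setIntegral_congr_fun isOpen_Bplus.measurableSet hdiv]
  refine setIntegral_divergence_Bplus_nonpos ((hρ.continuousOn.mul hw.continuousOn).smul hVc)
    (fun x hx => ((hρd x hx).mul (hwd.differentiableAt (Dplus_mem_nhds hx))).smul (hVd x hx))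
    (fun x hx hxi => ?_)
    (IntegrableOn.congr_fun hint hdiv isOpen_Bplus.measurableSet) (fun x hx => ?_)
  · have hxD : x ∈ Dplus d i := Dplus_eq ▸ ⟨Metric.sphere_subset_closedBall hx, hxi⟩
    exact isLittleO_one_sub_norm_sq_rpow_mul_smul (mem_sphere_zero_iff_norm.1 hx) (hwd x hxD)
      (hw0 x hx hxi) (hVc x hxD) hs
  · rw [PiLp.smul_apply, smul_eq_mul, mul_assoc]
    exact mul_nonneg (Real.rpow_nonneg (one_sub_norm_sq_pos (mem_ball_zero_iff.1 hx.1)).le s)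
      (hwV x hx)

theorem setIntegral_fderivWithin_add_mul_divergence_nonpos (hw : ContDiffOn ℝ 1 w (Dplus d i))
    (hw0 : ∀ x ∈ Metric.sphere (0 : EuclideanSpace ℝ (Fin d)) 1, 0 ≤ x i → w x = 0)
    (hVc : ContinuousOn V (Dplus d i)) (hVd : ∀ x ∈ Bplus d i, DifferentiableAt ℝ V x)
    (hVi : IntegrableOn (divergence V) (Bplus d i)) (hwV : ∀ x ∈ Bprime d i, 0 ≤ w x * V x i) :
    ∫ x in Bplus d i, (fderivWithin ℝ w (Dplus d i) x (V x) + w x * divergence V x) ≤ 0 := by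
  refine le_of_tendsto (tendsto_integral_rpow_mul_sub (by fun_prop) ae_one_sub_norm_sq_mem_Ioc
    (integrableOn_fderivWithin_add_mul hw hVc hVi)
    (integrableOn_div_one_sub_norm_sq_mul hw hw0
      (integrableOn_Bplus_of_continuousOn (f := fun x => 2 * inner ℝ x (V x)) (by fun_prop)))) ?_
  filter_upwards [self_mem_nhdsWithin] with s hs
  exact setIntegral_one_sub_norm_sq_rpow_mul_nonpos hw hw0 hVc hVd hVi hwV hs

end Green

section Poincare

variable {d : ℕ} {i : Fin d} {w : EuclideanSpace ℝ (Fin d) → ℝ}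

lemma integrableOn_norm_fderivWithin_sq (hw : ContDiffOn ℝ 1 w (Dplus d i)) :
    IntegrableOn (fun x => ‖fderivWithin ℝ w (Dplus d i) x‖ ^ 2) (Bplus d i) :=
  integrableOn_Bplus_of_continuousOn
    ((hw.continuousOn_fderivWithin uniqueDiffOn_Dplus le_rfl).norm.pow 2)

lemma setIntegral_two_mul_fderivWithin_add_nonpos (hw : ContDiffOn ℝ 1 w (Dplus d i))
    (hw0 : ∀ x ∈ Metric.sphere (0 : EuclideanSpace ℝ (Fin d)) 1, 0 ≤ x i → w x = 0) :
    ∫ x in Bplus d i, (2 * w x * fderivWithin ℝ w (Dplus d i) x x + d * w x ^ 2) ≤ 0 := by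
  have hd : divergence id = fun _ : EuclideanSpace ℝ (Fin d) => (d : ℝ) := by
    rw [divergence_id, finrank_euclideanSpace_fin]
  have hgreen := setIntegral_fderivWithin_add_mul_divergence_nonpos (V := id) (hw.pow 2)
    (fun x hx hxi => by simp only [hw0 x hx hxi, zero_pow two_ne_zero])
    continuousOn_id (fun x _ => differentiableAt_id)
    (hd ▸ integrableOn_Bplus_of_continuousOn continuousOn_const)
    (fun x hx => (mul_eq_zero_of_right _ hx.2).ge)
  refine (setIntegral_congr_fun isOpen_Bplus.measurableSet fun x hx => ?_).trans_le hgreen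
  have hxD := Bplus_subset_Dplus hx
  simp only [fderivWithin_fun_pow (uniqueDiffOn_Dplus x hxD) 2
    (hw.differentiableOn one_ne_zero x hxD), hd, id_eq, smul_apply, smul_eq_mul, nsmul_eq_mul]
  ring

theorem sq_mul_setIntegral_sq_le_Fth (hw : ContDiffOn ℝ 1 w (Dplus d i))
    (hw0 : ∀ x ∈ Metric.sphere (0 : EuclideanSpace ℝ (Fin d)) 1, 0 ≤ x i → w x = 0) :
    (d : ℝ) ^ 2 * ∫ x in Bplus d i, w x ^ 2 ≤ 8 * Fth d i w := by
  have hpt : ∀ x ∈ Bplus d i, d ^ 2 / 2 * w x ^ 2 - 2 * ‖fderivWithin ℝ w (Dplus d i) x‖ ^ 2 ≤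
      d * (2 * w x * fderivWithin ℝ w (Dplus d i) x x + d * w x ^ 2) := fun x hx => by
    have hle : ‖fderivWithin ℝ w (Dplus d i) x x‖ ≤ ‖fderivWithin ℝ w (Dplus d i) x‖ :=
      ContinuousLinearMap.unit_le_opNorm _ x (mem_ball_zero_iff.1 hx.1).le
    linarith [sq_nonneg (d * w x + 2 * fderivWithin ℝ w (Dplus d i) x x),
      sq_le_sq.2 (hle.trans (le_abs_self _))]
  have hw2 : IntegrableOn (fun x => w x ^ 2) (Bplus d i) :=
    integrableOn_Bplus_of_continuousOn (hw.continuousOn.pow 2)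
  have hw' := integrableOn_norm_fderivWithin_sq hw
  have hint : IntegrableOn
      (fun x => d * (2 * w x * fderivWithin ℝ w (Dplus d i) x x + d * w x ^ 2)) (Bplus d i) := by
    have := hw.continuousOn
    have := hw.continuousOn_fderivWithin uniqueDiffOn_Dplus le_rfl
    exact integrableOn_Bplus_of_continuousOn (by fun_prop)
  have hmono := setIntegral_mono_on ((hw2.const_mul (d ^ 2 / 2)).sub (hw'.const_mul 2)) hint
    isOpen_Bplus.measurableSet hpt
  simp only [Pi.sub_apply, integral_sub (hw2.const_mul _) (hw'.const_mul _),
    integral_const_mul] at hmono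
  have hgreen := mul_nonpos_of_nonneg_of_nonpos (Nat.cast_nonneg (α := ℝ) d)
    (setIntegral_two_mul_fderivWithin_add_nonpos hw hw0)
  rw [Fth]
  linarith

end Poincare

lemma half_norm_sq_sub_add_eq_apply_toDual_symm {E : Type*} [NormedAddCommGroup E]
    [InnerProductSpace ℝ E] [CompleteSpace E] (l m : StrongDual ℝ E) :
    (l - m) ((InnerProductSpace.toDual ℝ E).symm l) =
      1 / 2 * ‖l‖ ^ 2 - 1 / 2 * ‖m‖ ^ 2 + 1 / 2 * ‖l - m‖ ^ 2 := by
  obtain ⟨a, rfl⟩ := (InnerProductSpace.toDual ℝ E).surjective l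
  obtain ⟨b, rfl⟩ := (InnerProductSpace.toDual ℝ E).surjective m
  rw [← map_sub, LinearIsometryEquiv.symm_apply_apply, InnerProductSpace.toDual_apply_apply]
  simp only [LinearIsometryEquiv.norm_map, norm_sub_sq_real, inner_sub_left,
    real_inner_self_eq_norm_sq, real_inner_comm]
  ring

section Gradient

variable {d : ℕ} {i : Fin d} {u v : EuclideanSpace ℝ (Fin d) → ℝ}

lemma gradientWithin_apply (u : EuclideanSpace ℝ (Fin d) → ℝ) (s : Set (EuclideanSpace ℝ (Fin d)))
    (x : EuclideanSpace ℝ (Fin d)) (j : Fin d) :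
    gradientWithin u s x j = fderivWithin ℝ u s x (EuclideanSpace.single j 1) := by
  rw [← inner_gradientWithin_left, EuclideanSpace.inner_single_right]
  simp

lemma continuousOn_gradientWithin_Dplus (hu : ContDiffOn ℝ 1 u (Dplus d i)) :
    ContinuousOn (gradientWithin u (Dplus d i)) (Dplus d i) :=
  (InnerProductSpace.toDual ℝ _).symm.continuous.comp_continuousOn
    (hu.continuousOn_fderivWithin uniqueDiffOn_Dplus le_rfl)

lemma fderivWithin_Dplus_eventuallyEq {x : EuclideanSpace ℝ (Fin d)} (hx : x ∈ Bplus d i) :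
    fderivWithin ℝ u (Dplus d i) =ᶠ[𝓝 x] fderiv ℝ u :=
  eventuallyEq_of_mem (isOpen_Bplus.mem_nhds hx) fun _ hy =>
    fderivWithin_of_mem_nhds (Dplus_mem_nhds hy)

lemma differentiableAt_fderivWithin_Dplus (hu : ContDiffOn ℝ 2 u (Bplus d i))
    {x : EuclideanSpace ℝ (Fin d)} (hx : x ∈ Bplus d i) :
    DifferentiableAt ℝ (fderivWithin ℝ u (Dplus d i)) x :=
  (fderivWithin_Dplus_eventuallyEq hx).differentiableAt_iff.2
    (((hu.contDiffAt (isOpen_Bplus.mem_nhds hx)).fderiv_right le_rfl).differentiableAt one_ne_zero)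

lemma differentiableAt_gradientWithin_Dplus (hu : ContDiffOn ℝ 2 u (Bplus d i))
    {x : EuclideanSpace ℝ (Fin d)} (hx : x ∈ Bplus d i) :
    DifferentiableAt ℝ (gradientWithin u (Dplus d i)) x := by
  refine differentiableAt_euclidean.2 fun j => ?_
  simp only [gradientWithin_apply]
  exact (differentiableAt_fderivWithin_Dplus hu hx).clm_apply (differentiableAt_const _)

lemma laplTh_eq_sum_iteratedFDeriv (hu : ContDiffOn ℝ 2 u (Bplus d i))
    {x : EuclideanSpace ℝ (Fin d)} (hx : x ∈ Bplus d i) :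
    laplTh d i u x = ∑ j : Fin d, iteratedFDeriv ℝ 2 u x
      ![EuclideanSpace.single j 1, EuclideanSpace.single j 1] := by
  rw [laplTh, iteratedFDerivWithin_eq_iteratedFDeriv uniqueDiffOn_Dplus
    (hu.contDiffAt (isOpen_Bplus.mem_nhds hx)) (Bplus_subset_Dplus hx)]

lemma divergence_gradientWithin_Dplus (hu : ContDiffOn ℝ 2 u (Bplus d i))
    {x : EuclideanSpace ℝ (Fin d)} (hx : x ∈ Bplus d i) :
    divergence (gradientWithin u (Dplus d i)) x = laplTh d i u x := by
  have hgrad := differentiableAt_gradientWithin_Dplus hu hx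
  have hu' := differentiableAt_fderivWithin_Dplus hu hx
  rw [laplTh_eq_sum_iteratedFDeriv hu hx, divergence_eq_sum]
  refine Finset.sum_congr rfl fun j _ => ?_
  calc fderiv ℝ (gradientWithin u (Dplus d i)) x (EuclideanSpace.single j 1) j
      = fderiv ℝ (fun y => gradientWithin u (Dplus d i) y j) x (EuclideanSpace.single j 1) := by
        exact (DFunLike.congr_fun ((EuclideanSpace.proj (𝕜 := ℝ) j).hasFDerivAt.comp x
          hgrad.hasFDerivAt).fderiv _).symm
    _ = fderiv ℝ (fderiv ℝ u) x (EuclideanSpace.single j 1) (EuclideanSpace.single j 1) := by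
        simp only [gradientWithin_apply]
        rw [(hu'.hasFDerivAt.clm_apply (hasFDerivAt_const _ x)).fderiv,
          (fderivWithin_Dplus_eventuallyEq hx).fderiv_eq]
        simp
    _ = _ := by rw [iteratedFDeriv_two_apply]; rfl

lemma continuousOn_laplTh (hu : ContDiffOn ℝ 2 u (Dplus d i)) :
    ContinuousOn (laplTh d i u) (Dplus d i) :=
  continuousOn_finsetSum _ fun j _ =>
    (ContinuousMultilinearMap.apply ℝ (fun _ => EuclideanSpace ℝ (Fin d)) ℝ
      ![EuclideanSpace.single j 1, EuclideanSpace.single j 1]).continuous.comp_continuousOn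
      (hu.continuousOn_iteratedFDerivWithin le_rfl uniqueDiffOn_Dplus)

lemma setIntegral_fderivWithin_sub_gradientWithin (hu : ContDiffOn ℝ 1 u (Dplus d i))
    (hv : ContDiffOn ℝ 1 v (Dplus d i)) :
    ∫ x in Bplus d i, fderivWithin ℝ (u - v) (Dplus d i) x (gradientWithin u (Dplus d i) x) =
      Fth d i u - Fth d i v + Fth d i (u - v) := by
  have hu' := (integrableOn_norm_fderivWithin_sq hu).const_mul (1 / 2)
  have hv' := (integrableOn_norm_fderivWithin_sq hv).const_mul (1 / 2)
  have hw' := (integrableOn_norm_fderivWithin_sq (w := u - v) (hu.sub hv)).const_mul (1 / 2)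
  simp only [Fth, ← integral_const_mul]
  rw [← integral_sub hu' hv', ← integral_add (hu'.sub' hv') hw']
  refine setIntegral_congr_fun isOpen_Bplus.measurableSet fun x hx => ?_
  have hxD := Bplus_subset_Dplus hx
  simp only [fderivWithin_sub (uniqueDiffOn_Dplus x hxD) (hu.differentiableOn one_ne_zero x hxD)
    (hv.differentiableOn one_ne_zero x hxD)]
  exact half_norm_sq_sub_add_eq_apply_toDual_symm _ _

end Gradient

theorem Fth_sub_add_le_setIntegral_laplTh {d : ℕ} {i : Fin d}
    {g u v : EuclideanSpace ℝ (Fin d) → ℝ} (hug : MemKth d i g u) (hvg : MemKth d i g v)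
    (hu : ContDiffOn ℝ 1 u (Dplus d i)) (hu2 : ContDiffOn ℝ 2 u (Bplus d i))
    (hlapl : IntegrableOn (laplTh d i u) (Bplus d i))
    (hsig : ∀ x ∈ Bprime d i, dNorm d i u x ≤ 0 ∧ u x * dNorm d i u x = 0)
    (hv : ContDiffOn ℝ 1 v (Dplus d i)) :
    Fth d i u - Fth d i v + Fth d i (u - v) ≤ ∫ x in Bplus d i, (v x - u x) * laplTh d i u x := by
  have hdiv : EqOn (laplTh d i u) (divergence (gradientWithin u (Dplus d i))) (Bplus d i) :=
    fun x hx => (divergence_gradientWithin_Dplus hu2 hx).symm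
  have hflat : ∀ x ∈ Bprime d i, 0 ≤ (u - v) x * gradientWithin u (Dplus d i) x i := by
    intro x hx
    rw [gradientWithin_apply, Pi.sub_apply, sub_mul]
    change 0 ≤ u x * dNorm d i u x - v x * dNorm d i u x
    rw [(hsig x hx).2, zero_sub, neg_nonneg]
    exact mul_nonpos_of_nonneg_of_nonpos (hvg.2.1 x hx) (hsig x hx).1
  have hw : ContDiffOn ℝ 1 (u - v) (Dplus d i) := hu.sub hv
  have hgreen := setIntegral_fderivWithin_add_mul_divergence_nonpos hw
    (fun x hx hxi => by rw [Pi.sub_apply, hug.2.2 x hx hxi, hvg.2.2 x hx hxi, sub_self])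
    (continuousOn_gradientWithin_Dplus hu)
    (fun x hx => differentiableAt_gradientWithin_Dplus hu2 hx)
    (hlapl.congr_fun hdiv isOpen_Bplus.measurableSet) hflat
  have hgrad : IntegrableOn (fun x => fderivWithin ℝ (u - v) (Dplus d i) x
      (gradientWithin u (Dplus d i) x)) (Bplus d i) :=
    integrableOn_Bplus_of_continuousOn
      ((hw.continuousOn_fderivWithin uniqueDiffOn_Dplus le_rfl).clm_apply
        (continuousOn_gradientWithin_Dplus hu))
  have hmul : IntegrableOn (fun x => (v x - u x) * laplTh d i u x) (Bplus d i) :=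
    IntegrableOn.continuousOn_mul_of_subset (hv.continuousOn.sub hu.continuousOn) hlapl
      isCompact_Dplus isOpen_Bplus.measurableSet Bplus_subset_Dplus
  rw [← setIntegral_fderivWithin_sub_gradientWithin hu hv, ← sub_nonpos, ← integral_sub hgrad hmul]
  refine (setIntegral_congr_fun isOpen_Bplus.measurableSet fun x hx => ?_).trans_le hgreen
  simp only [← hdiv hx, Pi.sub_apply]
  ring

lemma integral_mul_le_sqrt_mul_sqrt {α : Type*} [MeasurableSpace α] {μ : Measure α} {f g : α → ℝ}
    (hf : MemLp f 2 μ) (hg : MemLp g 2 μ) :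
    ∫ x, f x * g x ∂μ ≤ √(∫ x, f x ^ 2 ∂μ) * √(∫ x, g x ^ 2 ∂μ) := by
  calc ∫ x, f x * g x ∂μ ≤ ∫ x, ‖f x‖ * ‖g x‖ ∂μ := by
        refine integral_mono (hf.integrable_mul hg) (hf.norm.integrable_mul hg.norm) fun x => ?_
        exact (le_abs_self _).trans_eq (abs_mul _ _)
    _ ≤ (∫ x, ‖f x‖ ^ (2 : ℝ) ∂μ) ^ (1 / 2 : ℝ) * (∫ x, ‖g x‖ ^ (2 : ℝ) ∂μ) ^ (1 / 2 : ℝ) :=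
        integral_mul_norm_le_Lp_mul_Lq Real.HolderConjugate.two_two (by simpa using hf)
          (by simpa using hg)
    _ = √(∫ x, f x ^ 2 ∂μ) * √(∫ x, g x ^ 2 ∂μ) := by
        simp only [Real.rpow_two, Real.norm_eq_abs, sq_abs, Real.sqrt_eq_rpow]

section ConstrainedNorm

variable {d : ℕ} {i : Fin d} {g u v : EuclideanSpace ℝ (Fin d) → ℝ}

lemma memLp_two_Bplus_of_continuousOn {f : EuclideanSpace ℝ (Fin d) → ℝ}
    (hf : ContinuousOn f (Dplus d i)) : MemLp f 2 (volume.restrict (Bplus d i)) :=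
  (memLp_two_iff_integrable_sq ((hf.mono Bplus_subset_Dplus).aestronglyMeasurable
    isOpen_Bplus.measurableSet)).2 (integrableOn_Bplus_of_continuousOn (hf.pow 2))

lemma integrableOn_Bplus_of_memLp_two {f : EuclideanSpace ℝ (Fin d) → ℝ}
    (hf : MemLp f 2 (volume.restrict (Bplus d i))) : IntegrableOn f (Bplus d i) :=
  haveI : IsFiniteMeasure (volume.restrict (Bplus d i)) :=
    isFiniteMeasure_restrict.2 (measure_ball_lt_top.trans_le' (measure_mono inter_subset_left)).ne
  hf.integrable one_le_two

lemma setIntegral_mul_laplTh_le_KnormTh_mul_sqrt (hu : ContinuousOn u (Dplus d i))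
    (hv : MemKth d i g v) (hlapl : MemLp (laplTh d i u) 2 (volume.restrict (Bplus d i))) :
    ∫ x in Bplus d i, (v x - u x) * laplTh d i u x ≤
      KnormTh d i g u * √(∫ x in Bplus d i, (v x - u x) ^ 2) := by
  have hCS : ∀ w, MemKth d i g w → ∫ x in Bplus d i, (w x - u x) * laplTh d i u x ≤
      √(∫ x in Bplus d i, (w x - u x) ^ 2) * √(∫ x in Bplus d i, laplTh d i u x ^ 2) :=
    fun w hw => integral_mul_le_sqrt_mul_sqrt (memLp_two_Bplus_of_continuousOn (hw.1.sub hu)) hlapl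
  have hsqrt : ∀ w : EuclideanSpace ℝ (Fin d) → ℝ, ∫ x in Bplus d i, (w x - u x) ^ 2 ≠ 0 →
      0 < √(∫ x in Bplus d i, (w x - u x) ^ 2) := fun w hw =>
    Real.sqrt_pos.2 ((integral_nonneg fun _ => sq_nonneg _).lt_of_ne' hw)
  by_cases hvu : ∫ x in Bplus d i, (v x - u x) ^ 2 = 0
  · simpa only [hvu, Real.sqrt_zero, zero_mul, mul_zero] using hCS v hv
  · rw [← div_le_iff₀ (hsqrt v hvu)]
    refine le_max_of_le_right
      (le_csSup ⟨√(∫ x in Bplus d i, laplTh d i u x ^ 2), ?_⟩ ⟨v, hv, hvu, rfl⟩)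
    rintro _ ⟨w, hw, hwu, rfl⟩
    exact (div_le_iff₀' (hsqrt w hwu)).2 (hCS w hw)

end ConstrainedNorm

section Lojasiewicz

variable {d : ℕ} {i : Fin d} {g φ u : EuclideanSpace ℝ (Fin d) → ℝ}

lemma Fth_nonneg : 0 ≤ Fth d i u :=
  mul_nonneg one_half_pos.le (integral_nonneg fun _ => sq_nonneg _)

theorem Fth_le_Fth_of_harmonic (hφg : MemKth d i g φ) (hφ : ContDiffOn ℝ 1 φ (Dplus d i))
    (hφ2 : ContDiffOn ℝ 2 φ (Bplus d i))
    (hharm : ∀ x ∈ Bplus d i, ∑ j : Fin d, iteratedFDeriv ℝ 2 φ x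
      ![EuclideanSpace.single j 1, EuclideanSpace.single j 1] = 0)
    (hsig : ∀ x ∈ Bprime d i, dNorm d i φ x ≤ 0 ∧ φ x * dNorm d i φ x = 0)
    (hug : MemKth d i g u) (hu : ContDiffOn ℝ 1 u (Dplus d i)) : Fth d i φ ≤ Fth d i u := by
  have hlapl : EqOn (laplTh d i φ) 0 (Bplus d i) := fun x hx =>
    (laplTh_eq_sum_iteratedFDeriv hφ2 hx).trans (hharm x hx)
  have hvar := Fth_sub_add_le_setIntegral_laplTh hφg hug hφ hφ2
    (integrableOn_zero.congr_fun hlapl.symm isOpen_Bplus.measurableSet) hsig hu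
  have hzero : ∫ x in Bplus d i, (u x - φ x) * laplTh d i φ x = 0 :=
    setIntegral_eq_zero_of_forall_eq_zero fun x hx => mul_eq_zero_of_right _ (hlapl hx)
  linarith [Fth_nonneg (i := i) (u := φ - u)]

theorem Fth_sub_le_KnormTh_sq (hφg : MemKth d i g φ) (hφ : ContDiffOn ℝ 1 φ (Dplus d i))
    (hug : MemKth d i g u) (hu : ContDiffOn ℝ 1 u (Dplus d i)) (hu2 : ContDiffOn ℝ 2 u (Bplus d i))
    (hlapl : MemLp (laplTh d i u) 2 (volume.restrict (Bplus d i)))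
    (hsig : ∀ x ∈ Bprime d i, dNorm d i u x ≤ 0 ∧ u x * dNorm d i u x = 0) :
    (d : ℝ) ^ 2 * (Fth d i u - Fth d i φ) ≤ 2 * KnormTh d i g u ^ 2 := by
  let s := √(∫ x in Bplus d i, (φ x - u x) ^ 2)
  have hvar : Fth d i u - Fth d i φ + Fth d i (u - φ) ≤ KnormTh d i g u * s :=
    (Fth_sub_add_le_setIntegral_laplTh hug hφg hu hu2 (integrableOn_Bplus_of_memLp_two hlapl) hsig
      hφ).trans (setIntegral_mul_laplTh_le_KnormTh_mul_sqrt hug.1 hφg hlapl)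
  have hpoincare : (d : ℝ) ^ 2 * s ^ 2 ≤ 8 * Fth d i (u - φ) := by
    rw [Real.sq_sqrt (integral_nonneg fun _ => sq_nonneg _)]
    simp only [sub_sq_comm (φ _)]
    exact sq_mul_setIntegral_sq_le_Fth (hu.sub hφ) fun x hx hxi => by
      rw [hug.2.2 x hx hxi, hφg.2.2 x hx hxi, sub_self]
  nlinarith [sq_nonneg ((d : ℝ) ^ 2 * s - 4 * KnormTh d i g u),
    mul_le_mul_of_nonneg_left hvar (sq_nonneg (d : ℝ)),
    mul_le_mul_of_nonneg_left hpoincare (sq_nonneg (d : ℝ))]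

theorem constrained_loja_thin_obstacle_general (hφg : MemKth d i g φ)
    (hφ : ContDiffOn ℝ 1 φ (Dplus d i)) (hφ2 : ContDiffOn ℝ 2 φ (Bplus d i))
    (hharm : ∀ x ∈ Bplus d i, ∑ j : Fin d, iteratedFDeriv ℝ 2 φ x
      ![EuclideanSpace.single j 1, EuclideanSpace.single j 1] = 0)
    (hφsig : ∀ x ∈ Bprime d i, dNorm d i φ x ≤ 0 ∧ φ x * dNorm d i φ x = 0)
    (hug : MemKth d i g u) (hu : ContDiffOn ℝ 1 u (Dplus d i)) (hu2 : ContDiffOn ℝ 2 u (Bplus d i))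
    (hlapl : MemLp (laplTh d i u) 2 (volume.restrict (Bplus d i)))
    (husig : ∀ x ∈ Bprime d i, dNorm d i u x ≤ 0 ∧ u x * dNorm d i u x = 0) :
    Fth d i φ ≤ Fth d i u ∧ √(Fth d i u - Fth d i φ) ≤ √2 / d * KnormTh d i g u := by
  refine ⟨Fth_le_Fth_of_harmonic hφg hφ hφ2 hharm hφsig hug hu, ?_⟩
  have hd : (0 : ℝ) < d := Nat.cast_pos.2 i.pos
  have hK : 0 ≤ KnormTh d i g u := le_max_left _ _
  refine Real.sqrt_le_iff.2 ⟨by positivity, ?_⟩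
  rw [mul_pow, div_pow, Real.sq_sqrt zero_le_two, div_mul_eq_mul_div, le_div_iff₀' (by positivity)]
  exact Fth_sub_le_KnormTh_sq hφg hφ hug hu hu2 hlapl husig

end Lojasiewicz

/-- **Constrained Łojasiewicz inequality (exponent 1/2) for the thin-obstacle problem.**
There is `C > 0`, depending only on `d`, such that for every boundary datum `g`
(continuous, nonnegative on `B₁'`), every solution `φ` of the thin-obstacle problem with
datum `g`, and every `u ∈ K_th` of class `C²` on the closed half-ball satisfying the
Signorini conditions `∂u/∂x_d ≤ 0` and `u ∂u/∂x_d = 0` on `B₁'`: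
`F_th(u) ≥ F_th(φ)` and `(F_th(u) - F_th(φ))^{1/2} ≤ C ‖∇F_th(u)‖_K`. -/
theorem constrained_loja_thin_obstacle (d : ℕ) (hd : 2 ≤ d) :
    ∃ C > (0:ℝ), ∀ (i : Fin d) (g φ : EuclideanSpace ℝ (Fin d) → ℝ),
      ContinuousOn g (Dplus d i) →
      (∀ x ∈ Bprime d i, 0 ≤ g x) →
      MemKth d i g φ →
      ContDiffOn ℝ 1 φ (Dplus d i) →
      ContDiffOn ℝ 2 φ (Bplus d i) →
      (∀ x ∈ Bplus d i,
        (∑ j : Fin d, iteratedFDeriv ℝ 2 φ x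
          ![EuclideanSpace.single j 1, EuclideanSpace.single j 1]) = 0) →
      (∀ x ∈ Bprime d i, dNorm d i φ x ≤ 0 ∧ φ x * dNorm d i φ x = 0) →
      ∀ u : EuclideanSpace ℝ (Fin d) → ℝ, MemKth d i g u →
        ContDiffOn ℝ 2 u (Dplus d i) →
        (∀ x ∈ Bprime d i, dNorm d i u x ≤ 0 ∧ u x * dNorm d i u x = 0) →
        Fth d i φ ≤ Fth d i u ∧ Real.sqrt (Fth d i u - Fth d i φ) ≤ C * KnormTh d i g u := by
  refine ⟨√2 / d, by positivity, fun i g φ _ _ hφg hφ hφ2 hharm hφsig u hug hu husig => ?_⟩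
  exact constrained_loja_thin_obstacle_general hφg hφ hφ2 hharm hφsig hug (hu.of_le one_le_two)
    (hu.mono Bplus_subset_Dplus) (memLp_two_Bplus_of_continuousOn (continuousOn_laplTh hu)) husig
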